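/- For all m ≥ 3 and n ≥ 4, the Cartesian product P_m □ C_n is 2-spanning cyclable. -/

import Mathlib

/-!
Write the vertices of the cylinder `P_m □ C_n` as (level, angle) and let `x ≠ y` be vertices.

If `x` and `y` lie at different levels, cut the cylinder horizontally between them. Any block of
consecutive full levels is Hamiltonian, whatever its height and the parity of `n`: snake through
all angles but one, and return along the remaining angle (`HasCycle.levels`).

If `x` and `y` lie at the same level, rotate so that `x` lies at the angle `0` or `1` and `y` at
one of the angles `2, …, n - 1`. A grid with an even number of levels and at least two angles is
Hamiltonian (`HasCycle.strip`), so for even `m` the vertical cut into the angles `0, 1` and the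
angles `2, …, n - 1` works. For odd `m`, reflect the levels if necessary so that the common level is
not `0`. The angles `0, 1` of the positive levels form a Hamiltonian grid containing `x`, and what
remains is a grid of even height glued to the full level `0`, which is also Hamiltonian
(`HasCycle.notched`).

Paths and cycles are described by the sets of their coordinates in `ℕ × ℕ`, so that covering and
disjointness become linear arithmetic (`HasPath.join`, `HasPath.close`); two cycles with
complementary vertex sets form the required 2-factor (`separable_of_cycles`).
-/

open SimpleGraph

/-- `H` is a 2-factor of `X`: a spanning subgraph of `X` (on the same vertex set)
in which every vertex has valency 2. -/
def IsTwoFactor {V : Type*} (X H : SimpleGraph V) : Prop :=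
  H ≤ X ∧ ∀ v : V, (H.neighborSet v).ncard = 2

/-- The 2-factor `H` separates the vertex set `A`: every connected component (cycle)
of `H` contains exactly one vertex of `A`; in particular `H` consists of exactly
`A.card` cycles, each containing exactly one vertex of `A`. -/
def SeparatesSet {V : Type*} (H : SimpleGraph V) (A : Finset V) : Prop :=
  ∀ C : H.ConnectedComponent, ∃! a : V, a ∈ A ∧ H.connectedComponentMk a = C

/-- A graph `X` is `k`-spanning cyclable if for every set `A` of `k` distinct vertices
there is a 2-factor of `X` consisting of `k` cycles such that each vertex of `A`
belongs to a distinct cycle. -/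
def SpanningCyclable {V : Type*} (X : SimpleGraph V) (k : ℕ) : Prop :=
  ∀ A : Finset V, A.card = k → ∃ H : SimpleGraph V, IsTwoFactor X H ∧ SeparatesSet H A

/-- The cycle `C_n` on vertex set `ZMod n`: `x` and `y` are adjacent iff `x - y ∈ {1, -1}`. -/
def cycleZMod (n : ℕ) : SimpleGraph (ZMod n) :=
  SimpleGraph.circulantGraph ({1, -1} : Set (ZMod n))

/-- The pseudo-Cartesian product `C_m □_ℓ C_n`: start with `P_m □ C_n` (columns indexed by
`Fin m`, rows by `ZMod n`) and add the edges from `u_{m-1,j}` to `u_{0,j+ℓ}`.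
When `ℓ = 0` this is the Cartesian product `C_m □ C_n`. -/
def pseudoProd (m n : ℕ) (l : ZMod n) : SimpleGraph (Fin m × ZMod n) :=
  SimpleGraph.fromRel (fun u v =>
    (u.1 = v.1 ∧ v.2 = u.2 + 1) ∨
    ((u.1 : ℕ) + 1 = (v.1 : ℕ) ∧ u.2 = v.2) ∨
    ((u.1 : ℕ) = m - 1 ∧ (v.1 : ℕ) = 0 ∧ v.2 = u.2 + l))

namespace CylinderCycles

variable {V : Type*} {X : SimpleGraph V} {m n : ℕ} {φ : ℕ × ℕ → V}

/-! ### Paths and cycles in cylinder coordinates -/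

/-- `φ` parametrizes a cylinder in `X`: the box `[0, m) × [0, n)` is in bijection with the
vertices, and grid neighbours as well as the two ends `(i, n - 1)`, `(i, 0)` of each level `i`
are adjacent. Values of `φ` outside the box are irrelevant. -/
structure IsCoord (X : SimpleGraph V) (m n : ℕ) (φ : ℕ × ℕ → V) : Prop where
  inj : ∀ i j i' j', i < m → j < n → i' < m → j' < n →
    φ (i, j) = φ (i', j') → i = i' ∧ j = j'
  surj : ∀ x, ∃ i j, i < m ∧ j < n ∧ φ (i, j) = x
  angle : ∀ i j, i < m → j + 1 < n → X.Adj (φ (i, j)) (φ (i, j + 1))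
  wrap : ∀ i, i < m → X.Adj (φ (i, n - 1)) (φ (i, 0))
  level : ∀ i j, i + 1 < m → j < n → X.Adj (φ (i, j)) (φ (i + 1, j))

/-- The set `S` of coordinates lies in the box, and its image is the vertex set of a path of `X`
from `φ u` to `φ v`. -/
def HasPath (X : SimpleGraph V) (m n : ℕ) (φ : ℕ × ℕ → V) (S : Set (ℕ × ℕ))
    (u v : ℕ × ℕ) : Prop :=
  (∀ q ∈ S, q.1 < m ∧ q.2 < n) ∧
    ∃ p : X.Walk (φ u) (φ v), p.IsPath ∧ ∀ x, x ∈ p.support ↔ ∃ q ∈ S, φ q = x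

/-- The image of the set `S` of coordinates is the vertex set of a cycle of `X`. -/
def HasCycle (X : SimpleGraph V) (φ : ℕ × ℕ → V) (S : Set (ℕ × ℕ)) : Prop :=
  ∃ (u : V) (w : X.Walk u u), w.IsCycle ∧ ∀ x, x ∈ w.support ↔ ∃ q ∈ S, φ q = x

/-- The rectangle of levels `a, …, b` and angles `c, …, d`. -/
def rect (a b c d : ℕ) : Set (ℕ × ℕ) :=
  {q | a ≤ q.1 ∧ q.1 ≤ b ∧ c ≤ q.2 ∧ q.2 ≤ d}

lemma mem_rect {a b c d : ℕ} {q : ℕ × ℕ} :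
    q ∈ rect a b c d ↔ a ≤ q.1 ∧ q.1 ≤ b ∧ c ≤ q.2 ∧ q.2 ≤ d := Iff.rfl

lemma HasPath.single {i j : ℕ} (hi : i < m) (hj : j < n) :
    HasPath X m n φ (rect i i j j) (i, j) (i, j) := by
  refine ⟨fun q hq => ?_, .nil, by simp, fun x => ?_⟩
  · rw [mem_rect] at hq; omega
  · constructor
    · intro h
      exact ⟨(i, j), ⟨le_rfl, le_rfl, le_rfl, le_rfl⟩, (by simpa using h : x = φ (i, j)).symm⟩
    · rintro ⟨⟨a, b⟩, h, rfl⟩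
      obtain ⟨h1, h2, h3, h4⟩ := h
      obtain rfl : i = a := le_antisymm h1 h2
      obtain rfl : j = b := le_antisymm h3 h4
      simp

lemma HasPath.symm {S : Set (ℕ × ℕ)} {u v : ℕ × ℕ} (h : HasPath X m n φ S u v) :
    HasPath X m n φ S v u := by
  obtain ⟨hS, p, hp, hs⟩ := h
  exact ⟨hS, p.reverse, hp.reverse, by simpa using hs⟩

/-- Paths with disjoint vertex sets are joined by an edge between their ends. The union is
passed as a separate set `U`, so that rectangles can be assembled into rectangles. -/
lemma HasPath.join (hφ : IsCoord X m n φ) {S T U : Set (ℕ × ℕ)} {u v u' v' : ℕ × ℕ}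
    (h : HasPath X m n φ S u v) (h' : HasPath X m n φ T u' v')
    (hadj : X.Adj (φ v) (φ u')) (hdisj : ∀ q ∈ S, q ∉ T)
    (hU : ∀ q, q ∈ U ↔ q ∈ S ∨ q ∈ T) : HasPath X m n φ U u v' := by
  obtain ⟨hS, p, hp, hps⟩ := h
  obtain ⟨hT, p', hp', hps'⟩ := h'
  refine ⟨fun q hq => ((hU q).1 hq).elim (hS q) (hT q), p.append (.cons hadj p'), ?_, ?_⟩
  · rw [Walk.isPath_def, Walk.support_append, Walk.support_cons, List.tail_cons,
      List.nodup_append]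
    refine ⟨hp.support_nodup, hp'.support_nodup, ?_⟩
    rintro x hx y hy rfl
    obtain ⟨⟨a, b⟩, hq, rfl⟩ := (hps x).1 hx
    obtain ⟨⟨c, d⟩, hq', he⟩ := (hps' _).1 hy
    obtain ⟨rfl, rfl⟩ := hφ.inj _ _ _ _ (hT _ hq').1 (hT _ hq').2 (hS _ hq).1 (hS _ hq).2 he
    exact hdisj _ hq hq'
  · intro x
    rw [Walk.support_append, Walk.support_cons, List.tail_cons, List.mem_append, hps, hps']
    simp only [hU]
    constructor
    · rintro (⟨q, hq, rfl⟩ | ⟨q, hq, rfl⟩)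
      exacts [⟨q, .inl hq, rfl⟩, ⟨q, .inr hq, rfl⟩]
    · rintro ⟨q, hq | hq, rfl⟩
      exacts [.inl ⟨q, hq, rfl⟩, .inr ⟨q, hq, rfl⟩]

/-- A path containing the edge between its ends has no other vertex. -/
lemma eq_or_eq_of_mem_edges {u v z : V} {p : X.Walk u v} (hp : p.IsPath)
    (he : s(v, u) ∈ p.edges) (hz : z ∈ p.support) : z = u ∨ z = v := by
  cases p with
  | nil => simp at he
  | @cons _ b _ hab p =>
    rw [Walk.cons_isPath_iff] at hp
    rw [Walk.edges_cons, List.mem_cons] at he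
    rcases he with he | he
    · have hb : v = b := by
        rcases Sym2.eq_iff.1 he with ⟨h1, h2⟩ | ⟨h1, h2⟩
        · exact absurd h2 hab.ne
        · exact h1
      subst hb
      obtain rfl := (Walk.isPath_iff_nil.1 hp.1).eq_nil
      simpa using hz
    · exact absurd (Walk.snd_mem_support_of_mem_edges _ he) hp.2

/-- A path with an interior vertex `z` and adjacent ends closes up to a cycle; the vertex `z`
excludes the path consisting of a single edge. -/
lemma HasPath.close (hφ : IsCoord X m n φ) {S : Set (ℕ × ℕ)} {u v z : ℕ × ℕ}
    (h : HasPath X m n φ S u v) (hadj : X.Adj (φ v) (φ u))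
    (hu : u ∈ S) (hv : v ∈ S) (hz : z ∈ S) (hzu : z ≠ u) (hzv : z ≠ v) :
    HasCycle X φ S := by
  obtain ⟨hS, p, hp, hps⟩ := h
  have hinj : ∀ q ∈ S, ∀ q' ∈ S, φ q = φ q' → q = q' := fun q hq q' hq' he =>
    Prod.ext_iff.2 (hφ.inj _ _ _ _ (hS _ hq).1 (hS _ hq).2 (hS _ hq').1 (hS _ hq').2 he)
  refine ⟨_, .cons hadj p, ?_, fun x => ?_⟩
  · rw [Walk.cons_isCycle_iff]
    refine ⟨hp, fun he => ?_⟩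
    rcases eq_or_eq_of_mem_edges hp he ((hps _).2 ⟨z, hz, rfl⟩) with h | h
    · exact hzu (hinj _ hz _ hu h)
    · exact hzv (hinj _ hz _ hv h)
  · rw [Walk.support_cons, List.mem_cons, hps]
    constructor
    · rintro (rfl | h)
      exacts [⟨v, hv, rfl⟩, h]
    · exact .inr

/-! ### Hamiltonian cycles of parts of the cylinder -/

lemma HasPath.row (hφ : IsCoord X m n φ) {i a : ℕ} (hi : i < m) (k : ℕ) (hk : a + k < n) :
    HasPath X m n φ (rect i i a (a + k)) (i, a) (i, a + k) := by
  induction k with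
  | zero => exact .single hi hk
  | succ k ih =>
    refine (ih (by omega)).join hφ (.single (i := i) (j := a + (k + 1)) hi hk)
      (hφ.angle i (a + k) hi hk) ?_ ?_ <;> intro q <;> simp only [mem_rect] <;> omega

lemma HasPath.column (hφ : IsCoord X m n φ) {a j : ℕ} (hj : j < n) (k : ℕ) (hk : a + k < m) :
    HasPath X m n φ (rect a (a + k) j j) (a, j) (a + k, j) := by
  induction k with
  | zero => exact .single hk hj
  | succ k ih =>
    refine (ih (by omega)).join hφ (.single (i := a + (k + 1)) (j := j) hk hj)
      (hφ.level (a + k) j hk hj) ?_ ?_ <;> intro q <;> simp only [mem_rect] <;> omega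

/-- The boustrophedon path through the levels `r, …, r + k` and the angles `a, …, a + l`. -/
lemma HasPath.snake (hφ : IsCoord X m n φ) {r a l : ℕ} (hl : a + l < n) (k : ℕ)
    (hk : r + k < m) :
    HasPath X m n φ (rect r (r + k) a (a + l)) (r, a)
      (r + k, if Even k then a + l else a) := by
  induction k with
  | zero => simpa using HasPath.row hφ hk l hl
  | succ k ih =>
    have hrow := HasPath.row hφ (i := r + (k + 1)) hk l hl
    by_cases he : Even k
    · have ho : ¬ Even (k + 1) := by simpa [Nat.even_add_one] using he
      simp only [he, if_true] at ih
      simp only [ho, if_false]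
      refine (ih (by omega)).join hφ hrow.symm
        (hφ.level (r + k) _ hk hl) ?_ ?_ <;> intro q <;> simp only [mem_rect] <;> omega
    · have ho : Even (k + 1) := by simpa [Nat.even_add_one] using he
      simp only [he, if_false] at ih
      simp only [ho, if_true]
      refine (ih (by omega)).join hφ hrow
        (hφ.level (r + k) _ hk (by omega)) ?_ ?_ <;> intro q <;> simp only [mem_rect] <;> omega

/-- The full levels `r, …, r + k` form a Hamiltonian subgraph: a snake through the angles
`1, …, n - 1`, whose last vertex is adjacent to the angle `0` (around the cylinder if it lies at
the angle `n - 1`), and the return along the angle `0`. -/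
lemma HasCycle.levels (hφ : IsCoord X m n φ) (hn : 3 ≤ n) {r : ℕ} (k : ℕ) (hk : r + k < m) :
    HasCycle X φ (rect r (r + k) 0 (n - 1)) := by
  have h1 := HasPath.snake hφ (r := r) (a := 1) (l := n - 2) (by omega) k hk
  have h2 := (HasPath.column hφ (a := r) (j := 0) (by omega) k hk).symm
  have hadj : X.Adj (φ (r + k, if Even k then 1 + (n - 2) else 1)) (φ (r + k, 0)) := by
    split_ifs
    · rw [show 1 + (n - 2) = n - 1 by omega]
      exact hφ.wrap _ hk
    · exact (hφ.angle _ 0 hk (by omega)).symm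
  have h3 : HasPath X m n φ (rect r (r + k) 0 (n - 1)) (r, 1) (r, 0) := by
    refine h1.join hφ h2 hadj ?_ ?_ <;> intro q <;> simp only [mem_rect] <;> omega
  refine h3.close (z := (r, 2)) hφ (hφ.angle _ 0 (by omega) (by omega)) ?_ ?_ ?_ ?_ ?_ <;>
    simp [mem_rect] <;> omega

/-- A grid with an even number `k + 1` of levels and at least two angles is Hamiltonian. -/
lemma HasCycle.strip (hφ : IsCoord X m n φ) {r a l k : ℕ} (hl : a + 1 + l < n)
    (hk : r + k < m) (hodd : ¬ Even k) :
    HasCycle X φ (rect r (r + k) a (a + 1 + l)) := by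
  have h1 := HasPath.snake hφ (r := r) hl k hk
  have h2 := (HasPath.column hφ (a := r) (j := a) (by omega) k hk).symm
  simp only [hodd, if_false] at h1
  have hk0 : k ≠ 0 := by rintro rfl; simp at hodd
  have h3 : HasPath X m n φ (rect r (r + k) a (a + 1 + l)) (r, a + 1) (r, a) := by
    refine h1.join hφ h2 (hφ.angle _ _ hk (by omega)).symm ?_ ?_ <;> intro q <;>
      simp only [mem_rect] <;> omega
  refine h3.close (z := (r + 1, a)) hφ (hφ.angle _ _ (by omega) (by omega)) ?_ ?_ ?_ ?_ ?_ <;>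
    simp [mem_rect] <;> omega

/-- For an odd number `k + 2` of levels, the level `0` together with the angles `2, …, n - 1` of
all levels is Hamiltonian: once around the level `0`, from the angle `2` downwards to the angle
`3`, then a snake through the angles `3, …, n - 1` and the return along the angle `2`. -/
lemma HasCycle.notched (hφ : IsCoord X m n φ) (hn : 4 ≤ n) {k : ℕ} (hk : 1 + k < m)
    (hodd : ¬ Even k) :
    HasCycle X φ (rect 0 0 0 (n - 1) ∪ rect 1 (1 + k) 2 (n - 1)) := by
  have hk0 : k ≠ 0 := by rintro rfl; simp at hodd
  have h1 := (HasPath.row hφ (i := 0) (a := 0) (by omega) 2 (by omega)).symm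
  have h2 := (HasPath.row hφ (i := 0) (a := 3) (by omega) (n - 4) (by omega)).symm
  have h3 := HasPath.snake hφ (r := 1) (a := 3) (l := n - 4) (by omega) k hk
  have h4 := (HasPath.column hφ (a := 1) (j := 2) (by omega) k hk).symm
  simp only [hodd, if_false] at h3
  have h12 : HasPath X m n φ (rect 0 0 0 (n - 1)) (0, 2) (0, 3) := by
    refine h1.join hφ h2 ?_ ?_ ?_
    · rw [show 3 + (n - 4) = n - 1 by omega]
      exact (hφ.wrap 0 (by omega)).symm
    all_goals intro q; simp only [mem_rect]; omega
  have h34 : HasPath X m n φ (rect 1 (1 + k) 2 (n - 1)) (1, 3) (1, 2) := by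
    refine h3.join hφ h4 (hφ.angle _ 2 hk (by omega)).symm ?_ ?_ <;> intro q <;>
      simp only [mem_rect] <;> omega
  have h : HasPath X m n φ (rect 0 0 0 (n - 1) ∪ rect 1 (1 + k) 2 (n - 1)) (0, 2) (1, 2) := by
    refine h12.join hφ h34 (hφ.level 0 _ (by omega) (by omega)) ?_ (fun _ => Iff.rfl)
    intro q
    simp only [mem_rect]
    omega
  refine h.close (z := (0, 0)) hφ (hφ.level 0 _ (by omega) (by omega)).symm ?_ ?_ ?_ ?_ ?_ <;>
    simp [mem_rect] <;> omega

/-! ### 2-factors from two cycles -/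

/-- `X` has a 2-factor separating `x` from `y`, stated for an ordered pair instead of the set
`{x, y}` to avoid decidable equality. -/
def Separable (X : SimpleGraph V) (x y : V) : Prop :=
  ∃ H : SimpleGraph V, IsTwoFactor X H ∧
    ∀ C : H.ConnectedComponent, ∃! a : V, (a = x ∨ a = y) ∧ H.connectedComponentMk a = C

/-- Two cycles whose vertex sets are complementary make up a 2-factor separating any vertex of
the first from any vertex of the second. -/
lemma separable_of_cycles {s t x y : V} {c : X.Walk s s} {d : X.Walk t t}
    (hc : c.IsCycle) (hd : d.IsCycle) (hcd : ∀ z, z ∈ d.support ↔ z ∉ c.support)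
    (hx : x ∈ c.support) (hy : y ∈ d.support) :
    Separable X x y := by
  set H : SimpleGraph V := c.toSubgraph.spanningCoe ⊔ d.toSubgraph.spanningCoe with hH
  have hAdj : ∀ u v, H.Adj u v ↔ c.toSubgraph.Adj u v ∨ d.toSubgraph.Adj u v := fun u v => by
    simp [hH]
  have hcs : ∀ {u v}, c.toSubgraph.Adj u v → u ∈ c.support := fun h =>
    (Walk.mem_verts_toSubgraph _).1 h.fst_mem
  have hds : ∀ {u v}, d.toSubgraph.Adj u v → u ∈ d.support := fun h =>
    (Walk.mem_verts_toSubgraph _).1 h.fst_mem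
  have hinv : ∀ {u v}, H.Adj u v → (u ∈ c.support ↔ v ∈ c.support) := by
    intro u v h
    rcases (hAdj u v).1 h with h | h
    · exact iff_of_true (hcs h) (hcs h.symm)
    · exact iff_of_false ((hcd _).1 (hds h)) ((hcd _).1 (hds h.symm))
  have hreach : ∀ {u v}, H.Reachable u v → (u ∈ c.support ↔ v ∈ c.support) := by
    rintro u v ⟨p⟩
    induction p with
    | nil => rfl
    | cons h _ ih => exact (hinv h).trans ih
  have hconn : ∀ {s : V} (w : X.Walk s s), (∀ e ∈ w.edges, e ∈ H.edgeSet) →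
      ∀ {u v}, u ∈ w.support → v ∈ w.support → H.Reachable u v := by
    classical
    intro s w hw u v hu hv
    rw [← Walk.support_transfer w hw] at hu hv
    exact ⟨((w.transfer H hw).takeUntil u hu).reverse.append
      ((w.transfer H hw).takeUntil v hv)⟩
  have hce : ∀ e ∈ c.edges, e ∈ H.edgeSet := by
    intro e
    induction e with
    | h u v =>
      intro h
      exact (hAdj u v).2 (.inl (Walk.adj_toSubgraph_iff_mem_edges.2 h))
  have hde : ∀ e ∈ d.edges, e ∈ H.edgeSet := by
    intro e
    induction e with
    | h u v =>
      intro h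
      exact (hAdj u v).2 (.inr (Walk.adj_toSubgraph_iff_mem_edges.2 h))
  refine ⟨H, ⟨?_, fun v => ?_⟩, fun C => ?_⟩
  · intro u v h
    rcases (hAdj u v).1 h with h | h <;> exact h.adj_sub
  · by_cases hv : v ∈ c.support
    · rw [← hc.ncard_neighborSet_toSubgraph_eq_two hv]
      congr 1
      ext w
      exact (hAdj v w).trans (or_iff_left fun h => (hcd _).1 (hds h) hv)
    · rw [← hd.ncard_neighborSet_toSubgraph_eq_two ((hcd v).2 hv)]
      congr 1
      ext w
      exact (hAdj v w).trans (or_iff_right fun h => hv (hcs h))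
  · induction C using ConnectedComponent.ind with
    | h z =>
      by_cases hz : z ∈ c.support
      · refine ⟨x, ⟨.inl rfl, ConnectedComponent.eq.2 (hconn c hce hx hz)⟩, ?_⟩
        rintro a ⟨rfl | rfl, ha⟩
        · rfl
        · exact absurd ((hreach (ConnectedComponent.eq.1 ha)).2 hz) ((hcd _).1 hy)
      · refine ⟨y, ⟨.inr rfl, ConnectedComponent.eq.2 (hconn d hde hy ((hcd z).2 hz))⟩, ?_⟩
        rintro a ⟨rfl | rfl, ha⟩
        · exact absurd ((hreach (ConnectedComponent.eq.1 ha)).1 hx) hz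
        · rfl

lemma Separable.symm {x y : V} (h : Separable X x y) : Separable X y x := by
  obtain ⟨H, h1, h2⟩ := h
  refine ⟨H, h1, fun C => ?_⟩
  simpa only [or_comm] using h2 C

lemma HasCycle.separable (hφ : IsCoord X m n φ) {S T : Set (ℕ × ℕ)} (hS : HasCycle X φ S)
    (hT : HasCycle X φ T) (hST : ∀ q, q ∈ S ∨ q ∈ T ↔ q.1 < m ∧ q.2 < n)
    (hdisj : ∀ q ∈ S, q ∉ T) {p q : ℕ × ℕ} (hp : p ∈ S) (hq : q ∈ T) :
    Separable X (φ p) (φ q) := by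
  obtain ⟨s, c, hc, hcS⟩ := hS
  obtain ⟨t, d, hd, hdT⟩ := hT
  refine separable_of_cycles hc hd (fun z => ?_) ((hcS _).2 ⟨p, hp, rfl⟩)
    ((hdT _).2 ⟨q, hq, rfl⟩)
  rw [hcS, hdT]
  constructor
  · rintro ⟨⟨a, b⟩, h, rfl⟩ ⟨⟨a', b'⟩, h', he⟩
    have hb := (hST _).1 (.inr h)
    have hb' := (hST _).1 (.inl h')
    obtain ⟨rfl, rfl⟩ := hφ.inj _ _ _ _ hb'.1 hb'.2 hb.1 hb.2 he
    exact hdisj _ h' h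
  · intro h
    obtain ⟨i, j, hi, hj, rfl⟩ := hφ.surj z
    rcases (hST (i, j)).2 ⟨hi, hj⟩ with h' | h'
    exacts [absurd ⟨_, h', rfl⟩ h, ⟨_, h', rfl⟩]

/-! ### Separating two vertices in coordinates -/

/-- Vertices at different levels are separated by cutting the cylinder between their levels. -/
lemma separable_of_level_lt (hφ : IsCoord X m n φ) (hn : 4 ≤ n) {i i' j j' : ℕ} (hii : i < i')
    (hi' : i' < m) (hj : j < n) (hj' : j' < n) : Separable X (φ (i, j)) (φ (i', j')) := by
  have h1 := HasCycle.levels hφ (by omega) (r := 0) i (by omega)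
  have h2 := HasCycle.levels hφ (by omega) (r := i + 1) (m - i - 2) (by omega)
  refine h1.separable hφ h2 ?_ ?_ ?_ ?_
  · intro q; simp only [mem_rect]; omega
  · intro q; simp only [mem_rect]; omega
  · simp only [mem_rect]; omega
  · simp only [mem_rect]; omega

/-- Vertices at the same level, the first at an angle `0` or `1` and the second at another angle.
The angles `0` and `1` are cut out, at all levels for even `m` and at the positive levels for
odd `m`. -/
lemma separable_of_angle (hφ : IsCoord X m n φ) (hm : 3 ≤ m) (hn : 4 ≤ n) {i j j' : ℕ}
    (hi : i < m) (hpos : Even m ∨ 0 < i) (hj : j < 2) (h2 : 2 ≤ j') (hj' : j' < n) :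
    Separable X (φ (i, j)) (φ (i, j')) := by
  rcases Nat.even_or_odd m with he | ho
  · have hodd : ¬ Even (m - 1) := by
      rw [Nat.even_iff] at he ⊢; omega
    have h1 := HasCycle.strip hφ (r := 0) (a := 0) (l := 0) (k := m - 1) (by omega) (by omega)
      hodd
    have h2 := HasCycle.strip hφ (r := 0) (a := 2) (l := n - 4) (k := m - 1) (by omega)
      (by omega) hodd
    refine h1.separable hφ h2 ?_ ?_ ?_ ?_
    · intro q; simp only [mem_rect]; omega
    · intro q; simp only [mem_rect]; omega
    · simp only [mem_rect]; omega
    · simp only [mem_rect]; omega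
  · have hi0 : 0 < i := hpos.resolve_left (Nat.not_even_iff_odd.2 ho)
    have hodd : ¬ Even (m - 2) := by
      rw [Nat.odd_iff] at ho; rw [Nat.even_iff]; omega
    have h1 := HasCycle.strip hφ (r := 1) (a := 0) (l := 0) (k := m - 2) (by omega) (by omega)
      hodd
    have h2 := HasCycle.notched hφ hn (k := m - 2) (by omega) hodd
    refine h1.separable hφ h2 ?_ ?_ ?_ ?_
    · intro q; simp only [Set.mem_union, mem_rect]; omega
    · intro q; simp only [Set.mem_union, mem_rect]; omega
    · simp only [mem_rect]; omega
    · simp only [Set.mem_union, mem_rect]; omega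

/-! ### Coordinates of the product `P_m □ C_n` -/

lemma IsCoord.flip (hφ : IsCoord X m n φ) :
    IsCoord X m n (fun q => φ (m - 1 - q.1, q.2)) where
  inj i j i' j' hi hj hi' hj' h := by
    have := hφ.inj _ _ _ _ (by omega) hj (by omega) hj' h
    omega
  surj x := by
    obtain ⟨i, j, hi, hj, rfl⟩ := hφ.surj x
    refine ⟨m - 1 - i, j, by omega, hj, ?_⟩
    simp only [show m - 1 - (m - 1 - i) = i by omega]
  angle i j hi hj := hφ.angle _ _ (by omega) hj
  wrap i hi := hφ.wrap _ (by omega)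
  level i j hi hj := by
    have := hφ.level (m - 1 - (i + 1)) j (by omega) hj
    rw [show m - 1 - (i + 1) + 1 = m - 1 - i by omega] at this
    exact this.symm

/-- The standard coordinates of the cylinder, with the angle `0` placed at `c`. -/
def coord (m n : ℕ) [NeZero m] (c : ZMod n) (q : ℕ × ℕ) : Fin m × ZMod n :=
  (Fin.ofNat m q.1, c + q.2)

lemma isCoord_coord (m n : ℕ) [NeZero m] (hn : 4 ≤ n) (c : ZMod n) :
    IsCoord (pathGraph m □ cycleZMod n) m n (coord m n c) := by
  have : NeZero n := ⟨by omega⟩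
  have : Fact (1 < n) := ⟨by omega⟩
  refine ⟨?_, ?_, ?_, ?_, ?_⟩
  · intro i j i' j' hi hj hi' hj' h
    simp only [coord, Prod.mk.injEq, Fin.ext_iff, Fin.val_ofNat, add_right_inj] at h
    rw [Nat.mod_eq_of_lt hi, Nat.mod_eq_of_lt hi'] at h
    have h2 := congrArg ZMod.val h.2
    rw [ZMod.val_natCast_of_lt hj, ZMod.val_natCast_of_lt hj'] at h2
    exact ⟨h.1, h2⟩
  · rintro ⟨i, j⟩
    refine ⟨i, (j - c).val, i.2, ZMod.val_lt _, ?_⟩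
    simp [coord]
  · intro i j hi hj
    simp [coord, boxProd_adj, cycleZMod]
  · intro i hi
    have h : ((n - 1 : ℕ) : ZMod n) = -1 := by
      rw [Nat.cast_sub (by omega)]; simp
    simp [coord, boxProd_adj, cycleZMod, h]
  · intro i j hi hj
    simp [coord, boxProd_adj, pathGraph_adj, Nat.mod_eq_of_lt hi,
      Nat.mod_eq_of_lt (show i < m by omega)]

lemma separable (m n : ℕ) (hm : 3 ≤ m) (hn : 4 ≤ n) {x y : Fin m × ZMod n} (hxy : x ≠ y) :
    Separable (pathGraph m □ cycleZMod n) x y := by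
  have : NeZero m := ⟨by omega⟩
  have : NeZero n := ⟨by omega⟩
  -- The reflection of the levels disposes of the level `0`, which is excluded for odd `m`.
  have key : ∀ (c : ZMod n) (i j j' : ℕ), i < m → j < 2 → 2 ≤ j' → j' < n →
      Separable (pathGraph m □ cycleZMod n) (coord m n c (i, j)) (coord m n c (i, j')) := by
    intro c i j j' hi hj h2 hj'
    have hφ := isCoord_coord m n hn c
    by_cases h0 : 0 < i
    · exact separable_of_angle hφ hm hn hi (.inr h0) hj h2 hj'
    · have := separable_of_angle hφ.flip hm hn (i := m - 1) (by omega) (.inr (by omega)) hj h2 hj'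
      simpa [show i = 0 by omega] using this
  by_cases hl : x.1 = y.1
  · -- The origin of the angles is `x.2`, or `x.2 - 1` if `y` is the successor of `x`.
    obtain ⟨c, k, hk, hc, hy⟩ : ∃ (c : ZMod n) (k : ℕ), k < 2 ∧ c + k = x.2 ∧
        2 ≤ (y.2 - c).val := by
      have h0 : (y.2 - x.2).val ≠ 0 := by
        rw [Ne, ZMod.val_eq_zero, sub_eq_zero]
        exact fun h => hxy (Prod.ext hl h.symm)
      by_cases h1 : (y.2 - x.2).val = 1
      · refine ⟨x.2 - 1, 1, by omega, by simp, ?_⟩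
        have h2 : y.2 - (x.2 - 1) = ((2 : ℕ) : ZMod n) := by
          have h3 := ZMod.natCast_zmod_val (y.2 - x.2)
          rw [h1] at h3
          push_cast at h3 ⊢
          linear_combination -h3
        rw [h2, ZMod.val_natCast_of_lt (by omega)]
      · exact ⟨x.2, 0, by omega, by simp, by omega⟩
    have h := key c x.1 k (y.2 - c).val x.1.2 hk hy (ZMod.val_lt _)
    have hx : coord m n c (x.1, k) = x := by simp [coord, hc]
    have hy' : coord m n c (x.1, (y.2 - c).val) = y := by simp [coord, hl]
    rwa [hx, hy'] at h
  · have hφ := isCoord_coord m n hn 0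
    have hz : ∀ z : Fin m × ZMod n, coord m n 0 (z.1, z.2.val) = z := fun z => by simp [coord]
    rw [← hz x, ← hz y]
    rcases lt_or_gt_of_ne hl with h | h
    · exact separable_of_level_lt hφ hn h y.1.2 (ZMod.val_lt _) (ZMod.val_lt _)
    · exact (separable_of_level_lt hφ hn h x.1.2 (ZMod.val_lt _) (ZMod.val_lt _)).symm

end CylinderCycles

/-- For all `m ≥ 3` and `n ≥ 4`, the Cartesian product `P_m □ C_n`
is 2-spanning cyclable. -/
theorem statement_8 (m n : ℕ) (hm : 3 ≤ m) (hn : 4 ≤ n) :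
    SpanningCyclable (pathGraph m □ cycleZMod n) 2 := by
  intro A hA
  obtain ⟨x, y, hxy, rfl⟩ := Finset.card_eq_two.1 hA
  obtain ⟨H, h1, h2⟩ := CylinderCycles.separable m n hm hn hxy
  refine ⟨H, h1, fun C => ?_⟩
  simpa using h2 C
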